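/- Let c > 0 and let τ(s) = s + ic be the corresponding parabolic self-map of the right half-plane ℂ₊ = {Re s > 0}. Let h̃ be holomorphic on ℂ₊ and suppose the weighted composition operator W̃ : f ↦ h̃·(f∘τ) is bounded both on the Hardy space H²(ℂ₊) and on the Dirichlet space 𝒟(ℂ₊). Then for every λ ∈ ℂ and every integer n ≥ 1, the operator norms satisfy ‖(W̃ − λI)ⁿ‖_{H²(ℂ₊)} ≤ ‖(W̃ − λI)ⁿ‖_{𝒟(ℂ₊)}; consequently the spectral radii satisfy ρ_{H²(ℂ₊)}(W̃ − λI) ≤ ρ_{𝒟(ℂ₊)}(W̃ − λI). -/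

import Mathlib

open Complex MeasureTheory Metric Set Filter

noncomputable section

/-- The open unit disc in the complex plane. -/
def unitDisc : Set ℂ := Metric.ball 0 1

/-- The square of the Dirichlet norm:
`‖f‖²_𝒟 = |f(0)|² + ∫_𝔻 |f′(z)|² dA(z)`, with `A` normalized area measure. -/
def dirNormSq (f : ℂ → ℂ) : ℝ :=
  ‖f 0‖ ^ 2 + (1 / Real.pi) * ∫ z in unitDisc, ‖deriv f z‖ ^ 2

/-- Membership in the Dirichlet space `𝒟`: `f` is holomorphic on `𝔻` and
`|f′|²` is integrable over `𝔻`. -/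
def MemDirichlet (f : ℂ → ℂ) : Prop :=
  DifferentiableOn ℂ f unitDisc ∧
    IntegrableOn (fun z : ℂ => ‖deriv f z‖ ^ 2) unitDisc

open scoped Classical

/-- The right half-plane `ℂ₊ = {Re s > 0}`. -/
def RHP : Set ℂ := {s : ℂ | 0 < s.re}

/-- The conformal involution `M(z) = (1 − z)/(1 + z)` mapping `𝔻` onto `ℂ₊`. -/
def Mmap (z : ℂ) : ℂ := (1 - z) / (1 + z)

/-- The square of the Hardy norm on the right half-plane:
`‖f‖² = sup_{x>0} ∫_ℝ |f(x+iy)|² dy`. -/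
def hpHardyNormSq (f : ℂ → ℂ) : ℝ :=
  ⨆ x : {x : ℝ // 0 < x}, ∫ y : ℝ, ‖f ((x : ℝ) + (y : ℂ) * Complex.I)‖ ^ 2

/-- Membership in the Hardy space `H²(ℂ₊)`. -/
def MemHpHardy (f : ℂ → ℂ) : Prop :=
  DifferentiableOn ℂ f RHP ∧
    (∀ x : ℝ, 0 < x →
      Integrable fun y : ℝ => ‖f ((x : ℂ) + (y : ℂ) * Complex.I)‖ ^ 2) ∧
    ∃ M : ℝ, ∀ x : ℝ, 0 < x →
      (∫ y : ℝ, ‖f ((x : ℂ) + (y : ℂ) * Complex.I)‖ ^ 2) ≤ M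

/-- The square of the Dirichlet norm on the right half-plane:
`‖g‖_{𝒟(ℂ₊)} = ‖g∘M‖_𝒟`. -/
def hpDirNormSq (g : ℂ → ℂ) : ℝ := dirNormSq fun z => g (Mmap z)

/-- Membership in the Dirichlet space `𝒟(ℂ₊)`: `g` is holomorphic on `ℂ₊`
and `g∘M ∈ 𝒟`. -/
def MemHpDirichlet (g : ℂ → ℂ) : Prop :=
  DifferentiableOn ℂ g RHP ∧ MemDirichlet fun z => g (Mmap z)

/-- `H²(ℂ₊)`, realized as functions normalized to vanish off `ℂ₊`. -/
def H2Space : Set (ℂ → ℂ) :=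
  {f | MemHpHardy f ∧ ∀ s, s ∉ RHP → f s = 0}

/-- `𝒟(ℂ₊)`, realized as functions normalized to vanish off `ℂ₊`. -/
def DCSpace : Set (ℂ → ℂ) :=
  {g | MemHpDirichlet g ∧ ∀ s, s ∉ RHP → g s = 0}

/-- The weighted composition operator `W̃ : f ↦ h̃·(f∘τ)` on the right
half-plane, with `τ(s) = s + ic` (normalized to vanish off `ℂ₊`). -/
def WopHp (h : ℂ → ℂ) (c : ℝ) : (ℂ → ℂ) → ℂ → ℂ :=
  fun f s => if s ∈ RHP then h s * f (s + (c : ℂ) * Complex.I) else 0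

/-- The operator `T − λI`. -/
def opSub (T : (ℂ → ℂ) → ℂ → ℂ) (lam : ℂ) : (ℂ → ℂ) → ℂ → ℂ :=
  fun f s => T f s - lam * f s

/-- The square of the operator norm of `T` acting on `H²(ℂ₊)`. -/
def opNormSqH2 (T : (ℂ → ℂ) → ℂ → ℂ) : ℝ :=
  sInf {C : ℝ | 0 ≤ C ∧ ∀ f ∈ H2Space, T f ∈ H2Space ∧
    hpHardyNormSq (T f) ≤ C * hpHardyNormSq f}

/-- The square of the operator norm of `T` acting on `𝒟(ℂ₊)`. -/
def opNormSqD (T : (ℂ → ℂ) → ℂ → ℂ) : ℝ :=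
  sInf {C : ℝ | 0 ≤ C ∧ ∀ g ∈ DCSpace, T g ∈ DCSpace ∧
    hpDirNormSq (T g) ≤ C * hpDirNormSq g}

/-- The spectral radius of `T` on `H²(ℂ₊)`, via Gelfand's formula
(`opNormSqH2` is the squared norm, whence the exponent `1/(2n)`). -/
def rhoH2 (T : (ℂ → ℂ) → ℂ → ℂ) : ℝ :=
  limsup (fun n : ℕ => (opNormSqH2 (T^[n])) ^ (1 / (2 * (n : ℝ)))) atTop

/-- The spectral radius of `T` on `𝒟(ℂ₊)`, via Gelfand's formula. -/
def rhoD (T : (ℂ → ℂ) → ℂ → ℂ) : ℝ :=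
  limsup (fun n : ℕ => (opNormSqD (T^[n])) ^ (1 / (2 * (n : ℝ)))) atTop

/-!
For `a ∈ (2π/c)ℕ` the function `e^{-as}` is invariant under `s ↦ s + ic`, so multiplication by it
commutes with `W̃`, hence with every `T = (W̃ - λ)ⁿ`. Suppose first that `u ∈ H²(ℂ₊)` has a
derivative bounded in `L²` on vertical lines. As `a → ∞`, the Dirichlet integral of `e^{-as} u` is
dominated by `a² ∫∫ e^{-2ax} |u|²`, so `(2π/a) ‖e^{-as} u‖²_𝒟` is asymptotically at most
`‖u‖²_{H²}`.

Conversely, put `v = T u`. If `|v'(s) - a v(s)| ≤ A` on the line `Re s = x`, then `a |v| ≤ A` on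
every line `Re s = x₀ ≥ x`: Phragmén–Lindelöf gives the bound on `v' - a v` to the right of the
first line, and `v(s) = -∫₀^∞ e^{-at} (v' - a v)(s + t) dt`. Testing against functions on the lines
turns this into an inequality of `L²` norms, and integrating it over `0 < x ≤ x₀` bounds the
Dirichlet integral of `e^{-as} v` below by `(a/2) (1 - e^{-2a x₀}) ‖v(x₀ + i·)‖²_{L²}`. Letting
`a → ∞`, a bound `C` for `‖T‖²` on `𝒟(ℂ₊)` gives `‖v(x₀ + i·)‖²_{L²} ≤ C ‖u‖²_{H²}`.

For general `f ∈ H²(ℂ₊)` take `u = f(· + ε)` and let `ε → 0`: `T` is continuous for pointwise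
convergence, and Fatou's lemma applies on each line.
-/

open scoped ComplexConjugate ENNReal NNReal Topology

section HalfPlane

lemma isOpen_RHP : IsOpen RHP := isOpen_lt continuous_const continuous_re

lemma ofReal_mem_RHP {x : ℝ} : (x : ℂ) ∈ RHP ↔ 0 < x := Iff.rfl

lemma add_mul_I_mem_RHP {s : ℂ} {y : ℝ} : s + y * I ∈ RHP ↔ s ∈ RHP := by
  simp [RHP]

lemma add_ofReal_mem_RHP {s : ℂ} (hs : s ∈ RHP) {ε : ℝ} (hε : 0 ≤ ε) : s + ε ∈ RHP := by
  simpa [RHP] using add_pos_of_pos_of_nonneg hs hε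

lemma sub_le_re_of_mem_closedBall {s z : ℂ} {r : ℝ} (hz : z ∈ closedBall s r) :
    s.re - r ≤ z.re := by
  have := (abs_re_le_norm (z - s)).trans (mem_closedBall_iff_norm.1 hz)
  rw [sub_re] at this
  linarith [neg_le_of_abs_le this]

lemma closedBall_subset_RHP {s : ℂ} {r : ℝ} (hr : r < s.re) : closedBall s r ⊆ RHP :=
  fun _ hz ↦ (sub_pos.2 hr).trans_le (sub_le_re_of_mem_closedBall hz)

variable {E : Type*} [NormedAddCommGroup E] [NormedSpace ℂ E] {f : ℂ → E} {a x A B : ℝ}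

lemma norm_deriv_le_of_norm_le_on_RHP (hf : DifferentiableOn ℂ f RHP)
    (hB : ∀ s ∈ RHP, ‖f s‖ ≤ B) {s : ℂ} {r : ℝ} (hr : 0 < r) (hrs : r < s.re) :
    ‖deriv f s‖ ≤ B / r := by
  have hsub : closedBall s r ⊆ RHP := closedBall_subset_RHP hrs
  exact norm_deriv_le_of_forall_mem_sphere_norm_le hr
    (hf.mono (closure_ball_subset_closedBall.trans hsub)).diffContOnCl
    fun z hz ↦ hB z (hsub (sphere_subset_closedBall hz))

lemma norm_le_of_norm_le_of_re_eq (hf : DiffContOnCl ℂ f {s | x < s.re})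
    (hB : ∀ s, x ≤ s.re → ‖f s‖ ≤ B) (hA : ∀ s, s.re = x → ‖f s‖ ≤ A) {s : ℂ} (hs : x ≤ s.re) :
    ‖f s‖ ≤ A := by
  have hmaps : MapsTo (fun z : ℂ ↦ x + z) {z | 0 < z.re} {s | x < s.re} :=
    fun z (hz : 0 < z.re) ↦ by simpa using hz
  have hdiff : DiffContOnCl ℂ (fun z : ℂ ↦ f (x + z)) {z | 0 < z.re} :=
    hf.comp (differentiable_id.const_add (x : ℂ)).diffContOnCl hmaps
  have hbound (z : ℂ) (hz : 0 ≤ z.re) : ‖f (x + z)‖ ≤ B := hB _ (by simpa using hz)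
  have hPL := PhragmenLindelof.right_half_plane_of_bounded_on_real (z := s - x) (C := A) hdiff
    ⟨0, two_pos, 0, ?_⟩ ?_ (fun y ↦ hA _ (by simp)) (by simpa using hs)
  · simpa using hPL
  · refine .of_bound B (eventually_inf_principal.2 <| .of_forall fun z hz ↦ ?_)
    simpa using hbound z (le_of_lt hz)
  · exact isBoundedUnder_of_eventually_le
      ((eventually_ge_atTop 0).mono fun t ht ↦ hbound t (by simpa using ht))

lemma mul_norm_le_of_norm_deriv_sub_smul_le {F : Type*} [NormedAddCommGroup F] [NormedSpace ℝ F]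
    {g g' : ℝ → F} {t₀ : ℝ} (ha : 0 < a) (hg : ∀ t, t₀ ≤ t → HasDerivAt g (g' t) t)
    (hB : ∀ t, t₀ ≤ t → ‖g t‖ ≤ B) (hA : ∀ t, t₀ ≤ t → ‖g' t - a • g t‖ ≤ A) :
    a * ‖g t₀‖ ≤ A := by
  have hexp (t : ℝ) :
      HasDerivAt (fun t ↦ Real.exp (-a * (t - t₀))) (-a * Real.exp (-a * (t - t₀))) t := by
    convert! (((hasDerivAt_id t).sub_const t₀).const_mul (-a)).exp using 1
    simp [mul_comm]
  set h : ℝ → F := fun t ↦ Real.exp (-a * (t - t₀)) • g t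
  have hderiv (t : ℝ) (ht : t₀ ≤ t) :
      HasDerivAt h (Real.exp (-a * (t - t₀)) • (g' t - a • g t)) t := by
    convert! (hexp t).smul (hg t ht) using 1
    module
  have hsub (T : ℝ) (hT : t₀ ≤ T) : ‖h T - h t₀‖ ≤ A / a * (1 - Real.exp (-a * (T - t₀))) := by
    refine image_norm_le_of_norm_deriv_right_le_deriv_boundary (f := fun t ↦ h t - h t₀)
      (fun t ht ↦ ((hderiv t ht.1).sub_const _).continuousAt.continuousWithinAt)
      (fun t ht ↦ ((hderiv t ht.1).sub_const _).hasDerivWithinAt) (by simp)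
      (fun t ↦ ((hexp t).const_sub 1).const_mul (A / a)) (fun t ht ↦ ?_) (right_mem_Icc.2 hT)
    rw [norm_smul, Real.norm_eq_abs, Real.abs_exp]
    calc Real.exp (-a * (t - t₀)) * ‖g' t - a • g t‖ ≤ Real.exp (-a * (t - t₀)) * A := by
          gcongr; exact hA t ht.1
      _ = A / a * -(-a * Real.exp (-a * (t - t₀))) := by field_simp
  have hdecay : Tendsto (fun T ↦ Real.exp (-a * (T - t₀))) atTop (𝓝 0) :=
    Real.tendsto_exp_atBot.comp
      ((tendsto_atTop_add_const_right _ _ tendsto_id).const_mul_atTop_of_neg (neg_neg_of_pos ha))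
  have hh : Tendsto h atTop (𝓝 0) := by
    refine squeeze_zero_norm' (a := fun T ↦ Real.exp (-a * (T - t₀)) * B) ?_
      (by simpa using hdecay.mul_const B)
    filter_upwards [eventually_ge_atTop t₀] with T hT
    rw [norm_smul, Real.norm_eq_abs, Real.abs_exp]
    exact mul_le_mul_of_nonneg_left (hB T hT) (Real.exp_pos _).le
  have hlim : ‖0 - h t₀‖ ≤ A / a * (1 - 0) :=
    le_of_tendsto_of_tendsto (hh.sub_const _).norm ((hdecay.const_sub 1).const_mul _)
      ((eventually_ge_atTop t₀).mono hsub)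
  simpa [h, le_div_iff₀' ha] using hlim

lemma mul_norm_le_of_norm_deriv_sub_smul_le_of_re_eq [CompleteSpace E]
    (hf : DifferentiableOn ℂ f RHP) (hB : ∀ s ∈ RHP, ‖f s‖ ≤ B) (ha : 0 < a) (hx : 0 < x)
    (hA : ∀ s, s.re = x → ‖deriv f s - a • f s‖ ≤ A) {x₀ : ℝ} (hx₀ : x ≤ x₀) :
    a * ‖f x₀‖ ≤ A := by
  have hmem {s : ℂ} (hs : x ≤ s.re) : s ∈ RHP := hx.trans_le hs
  have hdiff : DifferentiableOn ℂ (fun s ↦ deriv f s - a • f s) RHP :=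
    (hf.deriv isOpen_RHP).sub (hf.const_smul a)
  have hdcc : DiffContOnCl ℂ (fun s ↦ deriv f s - a • f s) {s | x < s.re} := by
    refine (hdiff.mono fun s hs ↦ ?_).diffContOnCl
    rw [closure_setOfPred_lt_re] at hs
    exact hmem hs
  have hbound (s : ℂ) (hs : x ≤ s.re) : ‖deriv f s - a • f s‖ ≤ B / (x / 2) + a * B := by
    refine (norm_sub_le _ _).trans (add_le_add ?_ ?_)
    · exact norm_deriv_le_of_norm_le_on_RHP hf hB (half_pos hx) (by linarith)
    · rw [norm_smul, Real.norm_of_nonneg ha.le]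
      gcongr
      exact hB s (hmem hs)
  refine mul_norm_le_of_norm_deriv_sub_smul_le (g := fun t : ℝ ↦ f t) (t₀ := x₀) ha
    (fun t ht ↦ ?_) (fun t ht ↦ hB t (hmem (hx₀.trans ht)))
    (fun t ht ↦ norm_le_of_norm_le_of_re_eq hdcc hbound hA (hx₀.trans ht))
  have hderiv := hf.hasDerivAt (isOpen_RHP.mem_nhds (hmem (s := t) (hx₀.trans ht)))
  simpa using! hderiv.scomp t ofRealCLM.hasDerivAt

end HalfPlane

section LineNorm

/-- The pairing `∫_{-R}^{R} G(s + iy) ψ(y) dy` of the restriction of `G` to the vertical line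
through `s` with a test function `ψ`. It turns `L²` statements about vertical lines into statements
about scalar holomorphic functions of `s`. -/
def linePairing (G : ℂ → ℂ) (ψ : ℝ → ℂ) (R : ℝ) (s : ℂ) : ℂ :=
  ∫ y in (-R)..R, G (s + y * I) * ψ y

/-- The `L²` norm of `G` on the vertical line `Re s = x`. -/
def lineNorm (G : ℂ → ℂ) (x : ℝ) : ℝ≥0∞ :=
  eLpNorm (fun y : ℝ ↦ G (x + y * I)) 2 volume

variable {F G : ℂ → ℂ} {ψ : ℝ → ℂ} {R x x₀ a : ℝ} {s : ℂ} {N : ℝ≥0}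

lemma continuous_line (hG : ContinuousOn G RHP) (hs : s ∈ RHP) :
    Continuous fun y : ℝ ↦ G (s + y * I) :=
  hG.comp_continuous (by fun_prop) fun _ ↦ add_mul_I_mem_RHP.2 hs

lemma lineNorm_sq (G : ℂ → ℂ) (x : ℝ) : lineNorm G x ^ 2 = ∫⁻ y : ℝ, ‖G (x + y * I)‖ₑ ^ 2 := by
  simpa using! eLpNorm_nnreal_pow_eq_lintegral (μ := volume) (f := fun y : ℝ ↦ G (x + y * I))
    (two_ne_zero (α := ℝ≥0))

lemma lineNorm_congr (h : EqOn F G RHP) (hx : 0 < x) : lineNorm F x = lineNorm G x := by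
  simp only [lineNorm, h (add_mul_I_mem_RHP.2 (ofReal_mem_RHP.2 hx))]

lemma lineNorm_sub_le (hF : ContinuousOn F RHP) (hG : ContinuousOn G RHP) (hx : 0 < x) :
    lineNorm (fun s ↦ F s - G s) x ≤ lineNorm F x + lineNorm G x :=
  eLpNorm_sub_le (continuous_line hF hx).aestronglyMeasurable
    (continuous_line hG hx).aestronglyMeasurable one_le_two

lemma lineNorm_const_mul (a : ℂ) (G : ℂ → ℂ) (x : ℝ) :
    lineNorm (fun s ↦ a * G s) x = ‖a‖ₑ * lineNorm G x :=
  eLpNorm_const_smul a _ _ _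

lemma eLpNorm_line_eq_lineNorm (hG : ContinuousOn G RHP) (hs : s ∈ RHP) :
    eLpNorm (fun y : ℝ ↦ G (s + y * I)) 2 volume = lineNorm G s.re := by
  have hline : Continuous fun y : ℝ ↦ G (s.re + y * I) := continuous_line hG hs
  rw [lineNorm, ← eLpNorm_comp_measurePreserving hline.aestronglyMeasurable
    (measurePreserving_add_left volume s.im)]
  congr! 2 with y
  simp only [Function.comp_apply, ofReal_add, add_mul, ← add_assoc, re_add_im]

lemma hasDerivAt_linePairing (hG : DifferentiableOn ℂ G RHP) (hψ : Continuous ψ) (hs : s ∈ RHP) :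
    HasDerivAt (linePairing G ψ R) (linePairing (deriv G) ψ R s) s := by
  have hs' : 0 < s.re := hs
  have hball : closedBall s (s.re / 2) ⊆ RHP := closedBall_subset_RHP (half_lt_self hs')
  have hG' : ContinuousOn (deriv G) RHP := (hG.deriv isOpen_RHP).continuousOn
  have hK : IsCompact ((fun p : ℂ × ℝ ↦ p.1 + p.2 * I) ''
      (closedBall s (s.re / 2) ×ˢ uIcc (-R) R)) :=
    ((isCompact_closedBall _ _).prod isCompact_uIcc).image (by fun_prop)
  obtain ⟨B, hB⟩ := hK.exists_bound_of_continuousOn (hG'.mono (by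
    rintro _ ⟨p, hp, rfl⟩
    exact add_mul_I_mem_RHP.2 (hball hp.1)))
  refine (intervalIntegral.hasDerivAt_integral_of_dominated_loc_of_deriv_le
    (F' := fun z y ↦ deriv G (z + y * I) * ψ y) (bound := fun y ↦ B * ‖ψ y‖)
    (closedBall_mem_nhds s (half_pos hs')) ?_
    (((continuous_line hG.continuousOn hs).mul hψ).intervalIntegrable _ _)
    ((continuous_line hG' hs).mul hψ).aestronglyMeasurable
    (.of_forall fun y hy z hz ↦ ?_) ((hψ.norm.const_mul B).intervalIntegrable _ _)
    (.of_forall fun y _ z hz ↦ ?_)).2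
  · filter_upwards [isOpen_RHP.mem_nhds hs] with z hz
    exact ((continuous_line hG.continuousOn hz).mul hψ).aestronglyMeasurable
  · rw [norm_mul]
    gcongr
    exact hB _ ⟨(z, y), ⟨hz, uIoc_subset_uIcc hy⟩, rfl⟩
  · exact ((hG.hasDerivAt (isOpen_RHP.mem_nhds
      (add_mul_I_mem_RHP.2 (hball hz)))).comp_add_const z _).mul_const _

lemma differentiableOn_linePairing (hG : DifferentiableOn ℂ G RHP) (hψ : Continuous ψ) :
    DifferentiableOn ℂ (linePairing G ψ R) RHP :=
  fun _ hs ↦ (hasDerivAt_linePairing hG hψ hs).differentiableAt.differentiableWithinAt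

lemma linePairing_const_mul (a : ℂ) :
    linePairing (fun s ↦ a * G s) ψ R s = a * linePairing G ψ R s := by
  simp only [linePairing, mul_assoc, intervalIntegral.integral_const_mul]

lemma linePairing_sub (hF : ContinuousOn F RHP) (hG : ContinuousOn G RHP) (hψ : Continuous ψ)
    (hs : s ∈ RHP) :
    linePairing (fun s ↦ F s - G s) ψ R s = linePairing F ψ R s - linePairing G ψ R s := by
  simp only [linePairing, sub_mul]
  exact intervalIntegral.integral_sub (((continuous_line hF hs).mul hψ).intervalIntegrable _ _)
    (((continuous_line hG hs).mul hψ).intervalIntegrable _ _)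

lemma memLp_restrict_uIoc (hψ : Continuous ψ) : MemLp ψ 2 (volume.restrict (uIoc (-R) R)) := by
  obtain ⟨B, hB⟩ := isCompact_uIcc.exists_bound_of_continuousOn (s := uIcc (-R) R) hψ.continuousOn
  have : IsFiniteMeasure (volume.restrict (uIoc (-R) R)) := Real.isFiniteMeasure_restrict_Ioc _ _
  exact .of_bound hψ.aestronglyMeasurable B
    (ae_restrict_of_forall_mem measurableSet_uIoc fun y hy ↦ hB y (uIoc_subset_uIcc hy))

lemma norm_linePairing_le (hG : ContinuousOn G RHP) (hψ : Continuous ψ) (hs : s ∈ RHP)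
    (hN : lineNorm G s.re ≤ N) :
    ‖linePairing G ψ R s‖ ≤ N * lpNorm ψ 2 (volume.restrict (uIoc (-R) R)) := by
  have hline := continuous_line hG hs
  have hψL : eLpNorm ψ 2 (volume.restrict (uIoc (-R) R)) ≠ ⊤ :=
    (memLp_restrict_uIoc hψ).eLpNorm_ne_top
  rw [← toReal_enorm, ← toReal_eLpNorm hψ.aestronglyMeasurable, ← ENNReal.coe_toReal,
    ← ENNReal.toReal_mul]
  refine ENNReal.toReal_mono (ENNReal.mul_ne_top ENNReal.coe_ne_top hψL) ?_
  calc ‖linePairing G ψ R s‖ₑ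
      = ‖∫ y in uIoc (-R) R, G (s + y * I) * ψ y‖ₑ := by
        simp only [← ofReal_norm, linePairing, intervalIntegral.norm_integral_eq_norm_integral_uIoc]
    _ ≤ eLpNorm ((fun y : ℝ ↦ G (s + y * I)) • ψ) 1 (volume.restrict (uIoc (-R) R)) := by
        rw [eLpNorm_one_eq_lintegral_enorm]
        exact enorm_integral_le_lintegral_enorm _
    _ ≤ eLpNorm (fun y : ℝ ↦ G (s + y * I)) 2 (volume.restrict (uIoc (-R) R)) *
          eLpNorm ψ 2 (volume.restrict (uIoc (-R) R)) :=
        eLpNorm_smul_le_mul_eLpNorm hψ.aestronglyMeasurable hline.aestronglyMeasurable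
    _ ≤ N * eLpNorm ψ 2 (volume.restrict (uIoc (-R) R)) := by
        gcongr
        exact (eLpNorm_restrict_le _ _ _ _).trans ((eLpNorm_line_eq_lineNorm hG hs).trans_le hN)

lemma norm_linePairing_conj (hG : ContinuousOn G RHP) (hs : s ∈ RHP) :
    ‖linePairing G (conj fun y : ℝ ↦ G (s + y * I)) R s‖ =
      lpNorm (fun y : ℝ ↦ G (s + y * I)) 2 (volume.restrict (uIoc (-R) R)) ^ 2 := by
  have hnonneg : 0 ≤ ∫ y in uIoc (-R) R, ‖G (s + y * I)‖ ^ 2 :=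
    integral_nonneg fun _ ↦ sq_nonneg _
  rw [lpNorm_eq_integral_norm_rpow_toReal two_ne_zero ENNReal.ofNat_ne_top
    (continuous_line hG hs).aestronglyMeasurable, linePairing,
    intervalIntegral.norm_integral_eq_norm_integral_uIoc]
  simp only [Pi.conj_apply, mul_conj, normSq_eq_norm_sq, integral_complex_ofReal, norm_real,
    Real.norm_of_nonneg hnonneg, ENNReal.toReal_ofNat, Real.rpow_ofNat]
  exact (Real.rpow_inv_natCast_pow hnonneg two_ne_zero).symm

lemma lineNorm_le_of_forall_norm_linePairing_le (hG : ContinuousOn G RHP) (hx : 0 < x)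
    (h : ∀ ψ R, Continuous ψ →
      ‖linePairing G ψ R x‖ ≤ N * lpNorm ψ 2 (volume.restrict (uIoc (-R) R))) :
    lineNorm G x ≤ N := by
  have hline : Continuous fun y : ℝ ↦ G (x + y * I) := continuous_line hG hx
  have htrunc (R : ℝ) :
      eLpNorm ((uIoc (-R) R).indicator fun y : ℝ ↦ G (x + y * I)) 2 volume ≤ N := by
    rw [eLpNorm_indicator_eq_eLpNorm_restrict measurableSet_uIoc]
    have hJ := memLp_restrict_uIoc (R := R) hline
    set J := lpNorm (fun y : ℝ ↦ G (x + y * I)) 2 (volume.restrict (uIoc (-R) R))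
    have hJJ : J ^ 2 ≤ N * J := by
      simpa [J, norm_linePairing_conj hG (ofReal_mem_RHP.2 hx)] using
        h (conj fun y : ℝ ↦ G (x + y * I)) R (continuous_conj.comp hline)
    rw [← ofReal_lpNorm hJ, ENNReal.ofReal_le_coe]
    obtain hJ0 | hJ0 := (lpNorm_nonneg : 0 ≤ J).eq_or_lt
    · exact hJ0.symm.trans_le N.2
    · exact le_of_mul_le_mul_right (by rwa [← sq]) hJ0
  refine Lp.eLpNorm_le_of_ae_tendsto (u := atTop) (.of_forall htrunc)
    (fun R ↦ hline.aestronglyMeasurable.indicator measurableSet_uIoc) (.of_forall fun y ↦ ?_)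
  refine tendsto_const_nhds.congr' ?_
  filter_upwards [eventually_gt_atTop |y|] with R hR
  have hy : y ∈ uIoc (-R) R := by
    rw [uIoc_of_le (by linarith [abs_nonneg y])]
    exact ⟨(abs_lt.1 hR).1, (abs_lt.1 hR).2.le⟩
  simp only [indicator_of_mem hy]

lemma lineNorm_deriv_le (hG : DifferentiableOn ℂ G RHP) (hN : ∀ x, 0 < x → lineNorm G x ≤ N)
    {r : ℝ≥0} (hr : 0 < r) (hrx : r < x) : lineNorm (deriv G) x ≤ (N / r : ℝ≥0) := by
  have hx : 0 < x := (NNReal.coe_pos.2 hr).trans hrx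
  refine lineNorm_le_of_forall_norm_linePairing_le (hG.deriv isOpen_RHP).continuousOn hx
    fun ψ R hψ ↦ ?_
  rw [← (hasDerivAt_linePairing hG hψ (ofReal_mem_RHP.2 hx)).deriv, NNReal.coe_div,
    div_mul_eq_mul_div]
  exact norm_deriv_le_of_norm_le_on_RHP (differentiableOn_linePairing hG hψ)
    (fun s hs ↦ norm_linePairing_le hG.continuousOn hψ hs (hN _ hs)) hr hrx

lemma lineNorm_const_mul_le_lineNorm_deriv_sub (hG : DifferentiableOn ℂ G RHP)
    (hN : ∀ x, 0 < x → lineNorm G x ≤ N) (ha : 0 < a) (hx : 0 < x) (hx₀ : x ≤ x₀) :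
    lineNorm (fun s ↦ a * G s) x₀ ≤ lineNorm (fun s ↦ deriv G s - a * G s) x := by
  obtain hA | hA := eq_or_ne (lineNorm (fun s ↦ deriv G s - a * G s) x) ⊤
  · exact hA ▸ le_top
  lift lineNorm (fun s ↦ deriv G s - a * G s) x to ℝ≥0 using hA with A hA'
  have hG' : ContinuousOn (deriv G) RHP := (hG.deriv isOpen_RHP).continuousOn
  have haG : ContinuousOn (fun s ↦ a * G s) RHP := hG.continuousOn.const_mul (a : ℂ)
  refine lineNorm_le_of_forall_norm_linePairing_le haG (hx.trans_le hx₀) fun ψ R hψ ↦ ?_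
  rw [linePairing_const_mul, norm_mul, norm_real, Real.norm_of_nonneg ha.le]
  refine mul_norm_le_of_norm_deriv_sub_smul_le_of_re_eq (differentiableOn_linePairing hG hψ)
    (fun s hs ↦ norm_linePairing_le hG.continuousOn hψ hs (hN _ hs)) ha hx (fun s hs ↦ ?_) hx₀
  have hs' : s ∈ RHP := hx.trans_eq hs.symm
  rw [(hasDerivAt_linePairing hG hψ hs').deriv, real_smul, ← linePairing_const_mul,
    ← linePairing_sub hG' haG hψ hs']
  exact norm_linePairing_le (hG'.sub haG) hψ hs' (by rw [hs, hA'])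

end LineNorm

section Dirichlet

lemma one_add_ne_zero_of_mem_RHP {s : ℂ} (hs : s ∈ RHP) : 1 + s ≠ 0 := by
  intro h
  have hre : 1 + s.re = 0 := by simpa using congr_arg re h
  linarith [show 0 < s.re from hs]

lemma one_add_ne_zero_of_mem_unitDisc {z : ℂ} (hz : z ∈ unitDisc) : 1 + z ≠ 0 := by
  intro h
  rw [unitDisc, mem_ball_zero_iff, eq_neg_of_add_eq_zero_right h] at hz
  simp at hz

lemma Mmap_Mmap {z : ℂ} (hz : 1 + z ≠ 0) : Mmap (Mmap z) = z := by
  simp only [Mmap]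
  field_simp
  ring_nf

lemma re_Mmap (z : ℂ) : (Mmap z).re = (1 - ‖z‖ ^ 2) / ‖1 + z‖ ^ 2 := by
  rw [Mmap, div_re, ← add_div, ← normSq_eq_norm_sq, ← normSq_eq_norm_sq, normSq_apply z]
  congr 1
  simp
  ring

lemma Mmap_mem_RHP_iff {z : ℂ} (hz : 1 + z ≠ 0) : Mmap z ∈ RHP ↔ z ∈ unitDisc := by
  rw [RHP, mem_ofPred_eq, re_Mmap, div_pos_iff_of_pos_right (pow_pos (norm_pos_iff.2 hz) 2),
    sub_pos, sq_lt_one_iff₀ (norm_nonneg z), unitDisc, mem_ball_zero_iff]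

lemma Mmap_mem_RHP {z : ℂ} (hz : z ∈ unitDisc) : Mmap z ∈ RHP :=
  (Mmap_mem_RHP_iff (one_add_ne_zero_of_mem_unitDisc hz)).2 hz

lemma Mmap_mem_unitDisc {s : ℂ} (hs : s ∈ RHP) : Mmap s ∈ unitDisc := by
  have hne : 1 + s ≠ 0 := one_add_ne_zero_of_mem_RHP hs
  have hne' : 1 + Mmap s ≠ 0 := by
    have : 1 + Mmap s = 2 / (1 + s) := by
      simp only [Mmap]
      field_simp
      ring
    exact this ▸ div_ne_zero two_ne_zero hne
  rwa [← Mmap_mem_RHP_iff hne', Mmap_Mmap hne]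

lemma bijOn_Mmap : BijOn Mmap unitDisc RHP :=
  InvOn.bijOn (f' := Mmap) ⟨fun _ hz ↦ Mmap_Mmap (one_add_ne_zero_of_mem_unitDisc hz),
    fun _ hs ↦ Mmap_Mmap (one_add_ne_zero_of_mem_RHP hs)⟩
    (fun _ ↦ Mmap_mem_RHP) fun _ ↦ Mmap_mem_unitDisc

lemma differentiableOn_Mmap : DifferentiableOn ℂ Mmap unitDisc :=
  ((differentiableOn_const 1).sub differentiableOn_id).div
    ((differentiableOn_const 1).add differentiableOn_id) fun _ ↦ one_add_ne_zero_of_mem_unitDisc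

lemma det_restrictScalars_toSpanSingleton (w : ℂ) :
    ((ContinuousLinearMap.toSpanSingleton ℂ w).restrictScalars ℝ).det = ‖w‖ ^ 2 := by
  have h := LinearMap.det_restrictScalars (R := ℝ)
    (f := (ContinuousLinearMap.toSpanSingleton ℂ w : ℂ →ₗ[ℂ] ℂ))
  rw [LinearMap.det_ring, Algebra.norm_complex_apply, normSq_eq_norm_sq] at h
  simpa using! h

lemma setLIntegral_image_enorm_deriv_sq {U : Set ℂ} (hU : IsOpen U) {φ g : ℂ → ℂ}
    (hφ : DifferentiableOn ℂ φ U) (hinj : InjOn φ U) (hg : ∀ z ∈ U, DifferentiableAt ℂ g (φ z)) :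
    ∫⁻ s in φ '' U, ‖deriv g s‖ₑ ^ 2 = ∫⁻ z in U, ‖deriv (fun z ↦ g (φ z)) z‖ₑ ^ 2 := by
  have hφ' (z : ℂ) (hz : z ∈ U) : HasDerivAt φ (deriv φ z) z := hφ.hasDerivAt (hU.mem_nhds hz)
  rw [lintegral_image_eq_lintegral_abs_det_fderiv_mul volume hU.measurableSet
    (fun z hz ↦ ((hφ' z hz).hasFDerivAt.restrictScalars ℝ).hasFDerivWithinAt) hinj]
  refine setLIntegral_congr_fun hU.measurableSet fun z hz ↦ ?_
  have hderiv : deriv (fun z ↦ g (φ z)) z = deriv g (φ z) * deriv φ z :=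
    ((hg z hz).hasDerivAt.comp z (hφ' z hz)).deriv
  simp only [hderiv, det_restrictScalars_toSpanSingleton, abs_pow, abs_norm,
    ENNReal.ofReal_pow (norm_nonneg _), ofReal_norm, enorm_mul, mul_pow]
  exact mul_comm _ _

/-- The Dirichlet integral `∫_{ℂ₊} |g′|² dA` over the half-plane, with `A` unnormalized area. -/
def dirichletIntegral (g : ℂ → ℂ) : ℝ≥0∞ := ∫⁻ s in RHP, ‖deriv g s‖ₑ ^ 2

variable {g : ℂ → ℂ}

lemma dirichletIntegral_eq_setLIntegral_unitDisc (hg : DifferentiableOn ℂ g RHP) :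
    dirichletIntegral g = ∫⁻ z in unitDisc, ‖deriv (fun z ↦ g (Mmap z)) z‖ₑ ^ 2 := by
  rw [dirichletIntegral, ← bijOn_Mmap.image_eq]
  exact setLIntegral_image_enorm_deriv_sq isOpen_ball differentiableOn_Mmap bijOn_Mmap.injOn
    fun z hz ↦ hg.differentiableAt (isOpen_RHP.mem_nhds (Mmap_mem_RHP hz))

lemma memHpDirichlet_iff :
    MemHpDirichlet g ↔ DifferentiableOn ℂ g RHP ∧ dirichletIntegral g < ⊤ := by
  refine and_congr_right fun hg ↦ ?_
  have hcomp : DifferentiableOn ℂ (fun z ↦ g (Mmap z)) unitDisc :=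
    hg.comp differentiableOn_Mmap fun _ ↦ Mmap_mem_RHP
  have hmeas : Measurable fun z ↦ ‖deriv (fun z ↦ g (Mmap z)) z‖ ^ 2 :=
    (measurable_deriv _).norm.pow_const 2
  rw [MemDirichlet, and_iff_right hcomp, IntegrableOn, Integrable,
    and_iff_right hmeas.aestronglyMeasurable, hasFiniteIntegral_iff_enorm,
    dirichletIntegral_eq_setLIntegral_unitDisc hg]
  simp only [enorm_pow, enorm_norm]

lemma hpDirNormSq_eq (hg : DifferentiableOn ℂ g RHP) :
    hpDirNormSq g = ‖g 1‖ ^ 2 + 1 / Real.pi * (dirichletIntegral g).toReal := by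
  have hmeas : Measurable fun z ↦ ‖deriv (fun z ↦ g (Mmap z)) z‖ ^ 2 :=
    (measurable_deriv _).norm.pow_const 2
  have hMmap : Mmap 0 = 1 := by simp [Mmap]
  rw [hpDirNormSq, dirNormSq, hMmap, dirichletIntegral_eq_setLIntegral_unitDisc hg,
    integral_eq_lintegral_of_nonneg_ae (.of_forall fun _ ↦ sq_nonneg _) hmeas.aestronglyMeasurable]
  simp only [ENNReal.ofReal_pow (norm_nonneg _), ofReal_norm]

lemma setLIntegral_RHP_eq_lintegral_lines {F : ℂ → ℝ≥0∞} (hF : Measurable F) :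
    ∫⁻ s in RHP, F s = ∫⁻ x in Ioi (0 : ℝ), ∫⁻ y : ℝ, F (x + y * I) := by
  have hmp := volume_preserving_equiv_real_prod.symm
  have hpre : measurableEquivRealProd.symm ⁻¹' RHP = Ioi (0 : ℝ) ×ˢ (univ : Set ℝ) := by
    ext p; simp [RHP, measurableEquivRealProd]
  rw [← hmp.setLIntegral_comp_preimage_emb measurableEquivRealProd.symm.measurableEmbedding, hpre,
    Measure.volume_eq_prod, ← Measure.prod_restrict, Measure.restrict_univ,
    lintegral_prod (fun p ↦ F (measurableEquivRealProd.symm p))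
      (hF.comp measurableEquivRealProd.symm.measurable).aemeasurable]
  simp only [measurableEquivRealProd_symm_apply, mk_eq_add_mul_I]

lemma dirichletIntegral_eq_lintegral_lineNorm_deriv (g : ℂ → ℂ) :
    dirichletIntegral g = ∫⁻ x in Ioi (0 : ℝ), lineNorm (deriv g) x ^ 2 := by
  simp only [lineNorm_sq]
  exact setLIntegral_RHP_eq_lintegral_lines ((measurable_deriv g).enorm.pow_const 2)

end Dirichlet

section ExpMul

/-- Multiplication of `G` by the exponential `e^{-as}`, which concentrates the Dirichlet integral of
`G` near the imaginary axis as `a → ∞`. -/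
def expMul (a : ℝ) (G : ℂ → ℂ) : ℂ → ℂ := fun s ↦ exp (-a * s) * G s

variable {G : ℂ → ℂ} {a b x x₀ : ℝ} {K N : ℝ≥0}

lemma differentiableOn_expMul (hG : DifferentiableOn ℂ G RHP) :
    DifferentiableOn ℂ (expMul a G) RHP := by
  unfold expMul
  fun_prop

lemma norm_expMul (a : ℝ) (G : ℂ → ℂ) (s : ℂ) :
    ‖expMul a G s‖ = Real.exp (-a * s.re) * ‖G s‖ := by
  simp [expMul, norm_exp]

lemma deriv_expMul (hG : DifferentiableOn ℂ G RHP) {s : ℂ} (hs : s ∈ RHP) :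
    deriv (expMul a G) s = expMul a (fun s ↦ deriv G s - a * G s) s := by
  have hexp : HasDerivAt (fun s : ℂ ↦ exp (-a * s)) (-a * exp (-a * s)) s := by
    simpa [mul_comm] using ((hasDerivAt_id s).const_mul (-a : ℂ)).cexp
  refine (hexp.mul (hG.hasDerivAt (isOpen_RHP.mem_nhds hs))).deriv.trans ?_
  rw [expMul]
  ring

lemma lineNorm_expMul (a : ℝ) (G : ℂ → ℂ) (x : ℝ) :
    lineNorm (expMul a G) x = ENNReal.ofReal (Real.exp (-a * x)) * lineNorm G x := by
  have hnorm : ‖(Real.exp (-a * x) : ℂ)‖ₑ = ENNReal.ofReal (Real.exp (-a * x)) := by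
    rw [← ofReal_norm, norm_real, Real.norm_of_nonneg (Real.exp_pos _).le]
  rw [← hnorm, ← lineNorm_const_mul]
  refine eLpNorm_congr_norm_ae (.of_forall fun y ↦ ?_)
  rw [norm_expMul, norm_mul, norm_real, Real.norm_of_nonneg (Real.exp_pos _).le]
  simp

lemma dirichletIntegral_expMul (hG : DifferentiableOn ℂ G RHP) :
    dirichletIntegral (expMul a G) = ∫⁻ x in Ioi (0 : ℝ),
      ENNReal.ofReal (Real.exp (-(2 * a * x))) * lineNorm (fun s ↦ deriv G s - a * G s) x ^ 2 := by
  rw [dirichletIntegral_eq_lintegral_lineNorm_deriv]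
  refine setLIntegral_congr_fun measurableSet_Ioi fun x hx ↦ ?_
  simp only [lineNorm_congr (fun _ ↦ deriv_expMul hG) hx, lineNorm_expMul, mul_pow,
    ← ENNReal.ofReal_pow (Real.exp_pos _).le, ← Real.exp_nat_mul]
  congr! 3
  push_cast
  ring

lemma setLIntegral_Ioi_exp_neg_mul (hb : 0 < b) :
    ∫⁻ x in Ioi (0 : ℝ), ENNReal.ofReal (Real.exp (-(b * x))) = ENNReal.ofReal b⁻¹ := by
  simp only [← neg_mul]
  rw [← ofReal_integral_eq_lintegral_ofReal (integrableOn_exp_mul_Ioi (neg_neg_of_pos hb) 0)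
    (.of_forall fun _ ↦ (Real.exp_pos _).le), integral_exp_mul_Ioi (neg_neg_of_pos hb)]
  simp

lemma setLIntegral_Ioc_exp_neg_mul (hb : b ≠ 0) (hx : 0 ≤ x) :
    ∫⁻ t in Ioc 0 x, ENNReal.ofReal (Real.exp (-(b * t))) =
      ENNReal.ofReal ((1 - Real.exp (-(b * x))) / b) := by
  have hcont : Continuous fun t ↦ Real.exp (-(b * t)) := by fun_prop
  rw [← ofReal_integral_eq_lintegral_ofReal (hcont.intervalIntegrable 0 x).1
    (.of_forall fun _ ↦ (Real.exp_pos _).le), ← intervalIntegral.integral_of_le hx]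
  simp only [← neg_mul]
  rw [intervalIntegral.integral_comp_mul_left _ (neg_ne_zero.2 hb), integral_exp]
  congr 1
  simp
  field_simp
  ring

lemma dirichletIntegral_expMul_le (hG : DifferentiableOn ℂ G RHP)
    (hN : ∀ x, 0 < x → lineNorm G x ≤ N) (hK : ∀ x, 0 < x → lineNorm (deriv G) x ≤ K)
    (ha : 0 < a) :
    dirichletIntegral (expMul a G) ≤ ENNReal.ofReal ((K + a * N) ^ 2 / (2 * a)) := by
  have hline (x : ℝ) (hx : 0 < x) :
      lineNorm (fun s ↦ deriv G s - a * G s) x ≤ ENNReal.ofReal (K + a * N) := by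
    calc lineNorm (fun s ↦ deriv G s - a * G s) x
        ≤ lineNorm (deriv G) x + lineNorm (fun s ↦ a * G s) x :=
          lineNorm_sub_le (hG.deriv isOpen_RHP).continuousOn (hG.continuousOn.const_mul (a : ℂ)) hx
      _ ≤ K + ENNReal.ofReal a * N := by
          rw [lineNorm_const_mul, ← ofReal_norm, norm_real, Real.norm_of_nonneg ha.le]
          gcongr
          exacts [hK x hx, hN x hx]
      _ = ENNReal.ofReal (K + a * N) := by
          rw [ENNReal.ofReal_add (by positivity) (by positivity), ENNReal.ofReal_mul ha.le,
            ENNReal.ofReal_coe_nnreal, ENNReal.ofReal_coe_nnreal]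
  calc dirichletIntegral (expMul a G)
      ≤ ∫⁻ x in Ioi (0 : ℝ),
          ENNReal.ofReal (Real.exp (-(2 * a * x))) * ENNReal.ofReal (K + a * N) ^ 2 := by
        rw [dirichletIntegral_expMul hG]
        refine setLIntegral_mono' measurableSet_Ioi fun x hx ↦ ?_
        gcongr
        exact hline x hx
    _ = ENNReal.ofReal ((K + a * N) ^ 2 / (2 * a)) := by
        rw [lintegral_mul_const _ (by fun_prop), setLIntegral_Ioi_exp_neg_mul (by positivity),
          ← ENNReal.ofReal_pow (by positivity), ← ENNReal.ofReal_mul (by positivity),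
          div_eq_inv_mul]

lemma ofReal_mul_lineNorm_sq_le_dirichletIntegral_expMul (hG : DifferentiableOn ℂ G RHP)
    (hN : ∀ x, 0 < x → lineNorm G x ≤ N) (ha : 0 < a) (hx₀ : 0 < x₀) :
    ENNReal.ofReal (a / 2 * (1 - Real.exp (-(2 * a * x₀)))) * lineNorm G x₀ ^ 2 ≤
      dirichletIntegral (expMul a G) := by
  have hnorm : lineNorm (fun s ↦ a * G s) x₀ = ENNReal.ofReal a * lineNorm G x₀ := by
    rw [lineNorm_const_mul, ← ofReal_norm, norm_real, Real.norm_of_nonneg ha.le]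
  calc ENNReal.ofReal (a / 2 * (1 - Real.exp (-(2 * a * x₀)))) * lineNorm G x₀ ^ 2
      = ∫⁻ x in Ioc 0 x₀,
          ENNReal.ofReal (Real.exp (-(2 * a * x))) * lineNorm (fun s ↦ a * G s) x₀ ^ 2 := by
        rw [lintegral_mul_const _ (by fun_prop),
          setLIntegral_Ioc_exp_neg_mul (by positivity) hx₀.le, hnorm, mul_pow, ← mul_assoc,
          ← ENNReal.ofReal_pow ha.le, ← ENNReal.ofReal_mul' (by positivity)]
        congr 2
        field_simp
    _ ≤ ∫⁻ x in Ioc 0 x₀, ENNReal.ofReal (Real.exp (-(2 * a * x))) *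
          lineNorm (fun s ↦ deriv G s - a * G s) x ^ 2 := by
        refine setLIntegral_mono' measurableSet_Ioc fun x hx ↦ ?_
        gcongr
        exact lineNorm_const_mul_le_lineNorm_deriv_sub hG hN ha hx.1 hx.2
    _ ≤ dirichletIntegral (expMul a G) := by
        rw [dirichletIntegral_expMul hG]
        exact lintegral_mono_set Ioc_subset_Ioi_self

lemma memHpDirichlet_expMul (hG : DifferentiableOn ℂ G RHP)
    (hN : ∀ x, 0 < x → lineNorm G x ≤ N) (hK : ∀ x, 0 < x → lineNorm (deriv G) x ≤ K)
    (ha : 0 < a) : MemHpDirichlet (expMul a G) :=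
  memHpDirichlet_iff.2 ⟨differentiableOn_expMul hG,
    (dirichletIntegral_expMul_le hG hN hK ha).trans_lt ENNReal.ofReal_lt_top⟩

lemma hpDirNormSq_expMul_le (hG : DifferentiableOn ℂ G RHP)
    (hN : ∀ x, 0 < x → lineNorm G x ≤ N) (hK : ∀ x, 0 < x → lineNorm (deriv G) x ≤ K)
    (ha : 0 < a) :
    hpDirNormSq (expMul a G) ≤
      (Real.exp (-a) * ‖G 1‖) ^ 2 + 1 / Real.pi * ((K + a * N) ^ 2 / (2 * a)) := by
  rw [hpDirNormSq_eq (differentiableOn_expMul hG), norm_expMul, one_re, mul_one]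
  gcongr
  exact ENNReal.toReal_le_of_le_ofReal (by positivity) (dirichletIntegral_expMul_le hG hN hK ha)

lemma mul_sq_le_hpDirNormSq_expMul (hD : MemHpDirichlet (expMul a G))
    (hG : DifferentiableOn ℂ G RHP) (hN : ∀ x, 0 < x → lineNorm G x ≤ N) (ha : 0 < a)
    (hx₀ : 0 < x₀) :
    1 / Real.pi * (a / 2 * (1 - Real.exp (-(2 * a * x₀))) * (lineNorm G x₀).toReal ^ 2) ≤
      hpDirNormSq (expMul a G) := by
  have hexp : Real.exp (-(2 * a * x₀)) ≤ 1 := Real.exp_le_one_iff.2 (neg_nonpos.2 (by positivity))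
  have hle := ENNReal.toReal_mono (memHpDirichlet_iff.1 hD).2.ne
    (ofReal_mul_lineNorm_sq_le_dirichletIntegral_expMul hG hN ha hx₀)
  rw [ENNReal.toReal_mul, ENNReal.toReal_pow, ENNReal.toReal_ofReal] at hle
  · rw [hpDirNormSq_eq hD.1]
    exact le_add_of_nonneg_of_le (sq_nonneg _) (by gcongr)
  · exact mul_nonneg (by positivity) (sub_nonneg.2 hexp)

end ExpMul

section Spaces

variable {f g : ℂ → ℂ} {x : ℝ} {N : ℝ≥0}

lemma integral_norm_line_sq (hf : ContinuousOn f RHP) (hx : 0 < x) :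
    ∫ y : ℝ, ‖f (x + y * I)‖ ^ 2 = (lineNorm f x).toReal ^ 2 := by
  rw [← ENNReal.toReal_pow, lineNorm_sq,
    integral_eq_lintegral_of_nonneg_ae (.of_forall fun _ ↦ sq_nonneg _)
      ((continuous_line hf hx).norm.pow 2).aestronglyMeasurable]
  simp [← ofReal_norm, ENNReal.ofReal_pow]

lemma hpHardyNormSq_nonneg (f : ℂ → ℂ) : 0 ≤ hpHardyNormSq f :=
  Real.iSup_nonneg fun _ ↦ integral_nonneg fun _ ↦ sq_nonneg _

lemma lineNorm_le_sqrt_hpHardyNormSq (hf : MemHpHardy f) (hx : 0 < x) :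
    lineNorm f x ≤ ENNReal.ofReal √(hpHardyNormSq f) := by
  obtain ⟨hd, hint, M, hM⟩ := hf
  have hcont := continuous_line hd.continuousOn (ofReal_mem_RHP.2 hx)
  have hfin : lineNorm f x ≠ ⊤ :=
    ((memLp_two_iff_integrable_sq_norm hcont.aestronglyMeasurable).2 (hint x hx)).eLpNorm_ne_top
  have hle : ∫ y : ℝ, ‖f (x + y * I)‖ ^ 2 ≤ hpHardyNormSq f :=
    le_ciSup (f := fun x : {x : ℝ // 0 < x} ↦ ∫ y : ℝ, ‖f ((x : ℝ) + y * I)‖ ^ 2)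
      ⟨M, forall_mem_range.2 fun x ↦ hM x x.2⟩ ⟨x, hx⟩
  rw [integral_norm_line_sq hd.continuousOn hx] at hle
  exact (ENNReal.le_ofReal_iff_toReal_le hfin (Real.sqrt_nonneg _)).2 (Real.le_sqrt_of_sq_le hle)

lemma memHpHardy_of_lineNorm_le (hf : DifferentiableOn ℂ f RHP)
    (hN : ∀ x, 0 < x → lineNorm f x ≤ N) : MemHpHardy f := by
  refine ⟨hf, fun x hx ↦ ?_, (N : ℝ) ^ 2, fun x hx ↦ ?_⟩
  · have hcont := continuous_line hf.continuousOn (ofReal_mem_RHP.2 hx)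
    exact (memLp_two_iff_integrable_sq_norm hcont.aestronglyMeasurable).1
      ⟨hcont.aestronglyMeasurable, (hN x hx).trans_lt ENNReal.coe_lt_top⟩
  · rw [integral_norm_line_sq hf.continuousOn hx]
    gcongr
    exact ENNReal.toReal_mono ENNReal.coe_ne_top (hN x hx)

lemma hpHardyNormSq_le_sq (hf : ContinuousOn f RHP) (hN : ∀ x, 0 < x → lineNorm f x ≤ N) :
    hpHardyNormSq f ≤ N ^ 2 := by
  have : Nonempty {x : ℝ // 0 < x} := ⟨1, one_pos⟩
  refine ciSup_le fun x ↦ ?_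
  rw [integral_norm_line_sq hf x.2]
  gcongr
  exact ENNReal.toReal_mono ENNReal.coe_ne_top (hN x x.2)

lemma sub_const_mul_mem_H2Space (hf : f ∈ H2Space) (hg : g ∈ H2Space) (a : ℂ) :
    (fun s ↦ f s - a * g s) ∈ H2Space := by
  refine ⟨memHpHardy_of_lineNorm_le (N := (√(hpHardyNormSq f)).toNNReal +
    ‖a‖₊ * (√(hpHardyNormSq g)).toNNReal) (hf.1.1.sub (hg.1.1.const_mul a)) fun x hx ↦ ?_,
    fun s hs ↦ by simp [hf.2 s hs, hg.2 s hs]⟩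
  calc lineNorm (fun s ↦ f s - a * g s) x
      ≤ lineNorm f x + ‖a‖ₑ * lineNorm g x :=
        (lineNorm_sub_le hf.1.1.continuousOn (hg.1.1.continuousOn.const_mul a) hx).trans_eq
          (by rw [lineNorm_const_mul])
    _ ≤ _ := by
        push_cast
        gcongr
        exacts [lineNorm_le_sqrt_hpHardyNormSq hf.1 hx, le_rfl,
          lineNorm_le_sqrt_hpHardyNormSq hg.1 hx]

lemma nnnorm_sub_sq_le {E : Type*} [SeminormedAddCommGroup E] (p q : E) :
    ‖p - q‖₊ ^ 2 ≤ 2 * (‖p‖₊ ^ 2 + ‖q‖₊ ^ 2) :=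
  (pow_le_pow_left₀ zero_le (nnnorm_sub_le p q) 2).trans add_sq_le

lemma dirichletIntegral_sub_const_mul_le (hf : DifferentiableOn ℂ f RHP)
    (hg : DifferentiableOn ℂ g RHP) (a : ℂ) :
    dirichletIntegral (fun s ↦ f s - a * g s) ≤
      2 * dirichletIntegral f + 2 * ‖a‖ₑ ^ 2 * dirichletIntegral g := by
  calc dirichletIntegral (fun s ↦ f s - a * g s)
      ≤ ∫⁻ s in RHP, (2 * ‖deriv f s‖ₑ ^ 2 + 2 * ‖a‖ₑ ^ 2 * ‖deriv g s‖ₑ ^ 2) := by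
        refine setLIntegral_mono' isOpen_RHP.measurableSet fun s hs ↦ ?_
        rw [((hf.hasDerivAt (isOpen_RHP.mem_nhds hs)).fun_sub
          ((hg.hasDerivAt (isOpen_RHP.mem_nhds hs)).const_mul a)).deriv, mul_assoc, ← mul_pow,
          ← mul_add, ← enorm_mul]
        simp only [enorm_eq_nnnorm]
        exact_mod_cast nnnorm_sub_sq_le (deriv f s) (a * deriv g s)
    _ = 2 * dirichletIntegral f + 2 * ‖a‖ₑ ^ 2 * dirichletIntegral g := by
        have := measurable_deriv g
        rw [lintegral_add_right _ (by fun_prop), lintegral_const_mul' _ _ (by finiteness),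
          lintegral_const_mul' _ _ (by finiteness), dirichletIntegral, dirichletIntegral]

lemma sub_const_mul_mem_DCSpace (hf : f ∈ DCSpace) (hg : g ∈ DCSpace) (a : ℂ) :
    (fun s ↦ f s - a * g s) ∈ DCSpace := by
  obtain ⟨hfd, hfin⟩ := memHpDirichlet_iff.1 hf.1
  obtain ⟨hgd, hgin⟩ := memHpDirichlet_iff.1 hg.1
  refine ⟨memHpDirichlet_iff.2 ⟨hfd.fun_sub (hgd.const_mul a),
    (dirichletIntegral_sub_const_mul_le hfd hgd a).trans_lt (by finiteness)⟩,
    fun s hs ↦ by simp [hf.2 s hs, hg.2 s hs]⟩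

lemma hpDirNormSq_sub_const_mul_le (hf : MemHpDirichlet f) (hg : MemHpDirichlet g) (a : ℂ) :
    hpDirNormSq (fun s ↦ f s - a * g s) ≤
      2 * hpDirNormSq f + 2 * ‖a‖ ^ 2 * hpDirNormSq g := by
  obtain ⟨hfd, hfin⟩ := memHpDirichlet_iff.1 hf
  obtain ⟨hgd, hgin⟩ := memHpDirichlet_iff.1 hg
  have hone : ‖f 1 - a * g 1‖ ^ 2 ≤ 2 * (‖f 1‖ ^ 2 + ‖a * g 1‖ ^ 2) :=
    mod_cast nnnorm_sub_sq_le (f 1) (a * g 1)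
  have hint : (dirichletIntegral fun s ↦ f s - a * g s).toReal ≤
      2 * (dirichletIntegral f).toReal + 2 * ‖a‖ ^ 2 * (dirichletIntegral g).toReal := by
    refine (ENNReal.toReal_mono (by finiteness)
      (dirichletIntegral_sub_const_mul_le hfd hgd a)).trans_eq ?_
    rw [ENNReal.toReal_add (by finiteness) (by finiteness)]
    simp
  rw [hpDirNormSq_eq hfd, hpDirNormSq_eq hgd, hpDirNormSq_eq (hfd.fun_sub (hgd.const_mul a))]
  rw [norm_mul] at hone
  linear_combination hone + 1 / Real.pi * hint

end Spaces

section Translate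

/-- The left translate `s ↦ f (s + ε)`, normalized to vanish off the half-plane. For `ε > 0` it
turns a function in `H²(ℂ₊)` into one whose derivative is also bounded in `L²` on vertical lines. -/
def translateRHP (f : ℂ → ℂ) (ε : ℝ) : ℂ → ℂ := RHP.indicator fun s ↦ f (s + ε)

variable {f : ℂ → ℂ} {x ε : ℝ} {N : ℝ≥0}

lemma hasDerivAt_translateRHP (hf : DifferentiableOn ℂ f RHP) (hε : 0 ≤ ε) {s : ℂ} (hs : s ∈ RHP) :
    HasDerivAt (translateRHP f ε) (deriv f (s + ε)) s := by
  have hderiv := hf.hasDerivAt (isOpen_RHP.mem_nhds (add_ofReal_mem_RHP hs hε))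
  exact (hderiv.comp_add_const s _).congr_of_eventuallyEq
    (eqOn_indicator.eventuallyEq_of_mem (isOpen_RHP.mem_nhds hs))

lemma lineNorm_comp_add_ofReal (f : ℂ → ℂ) (ε x : ℝ) :
    lineNorm (fun s ↦ f (s + ε)) x = lineNorm f (x + ε) := by
  simp only [lineNorm, ofReal_add, add_right_comm]

lemma lineNorm_translateRHP (f : ℂ → ℂ) (ε : ℝ) (hx : 0 < x) :
    lineNorm (translateRHP f ε) x = lineNorm f (x + ε) := by
  rw [translateRHP, lineNorm_congr eqOn_indicator hx, lineNorm_comp_add_ofReal]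

lemma lineNorm_deriv_translateRHP (hf : DifferentiableOn ℂ f RHP) (hε : 0 ≤ ε) (hx : 0 < x) :
    lineNorm (deriv (translateRHP f ε)) x = lineNorm (deriv f) (x + ε) := by
  rw [lineNorm_congr (fun s hs ↦ (hasDerivAt_translateRHP hf hε hs).deriv) hx,
    lineNorm_comp_add_ofReal]

lemma translateRHP_mem_H2Space (hf : f ∈ H2Space) (hε : 0 ≤ ε) : translateRHP f ε ∈ H2Space := by
  have hd : DifferentiableOn ℂ (translateRHP f ε) RHP := fun s hs ↦
    (hasDerivAt_translateRHP hf.1.1 hε hs).differentiableAt.differentiableWithinAt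
  refine ⟨memHpHardy_of_lineNorm_le (N := (√(hpHardyNormSq f)).toNNReal) hd fun x hx ↦ ?_,
    fun s hs ↦ indicator_of_notMem hs _⟩
  rw [lineNorm_translateRHP f ε hx]
  exact lineNorm_le_sqrt_hpHardyNormSq hf.1 (by positivity)

lemma tendsto_translateRHP (hf : ContinuousOn f RHP) (h₀ : ∀ s, s ∉ RHP → f s = 0) :
    Tendsto (translateRHP f) (𝓝 0) (𝓝 f) := by
  refine tendsto_pi_nhds.2 fun s ↦ ?_
  by_cases hs : s ∈ RHP
  · simp only [translateRHP, indicator_of_mem hs]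
    refine (hf.continuousAt (isOpen_RHP.mem_nhds hs)).tendsto.comp ?_
    exact Continuous.tendsto' (by fun_prop) _ _ (by simp)
  · simp [translateRHP, hs, h₀ s hs]

end Translate

section Transfer

variable {T : (ℂ → ℂ) → ℂ → ℂ} {f u : ℂ → ℂ} {x a C : ℝ} {K N : ℝ≥0}

lemma sq_lineNorm_le_of_commute_expMul (hT : MapsTo T H2Space H2Space)
    (hcomm : Function.Commute T (expMul a))
    (hD : ∀ g ∈ DCSpace, T g ∈ DCSpace ∧ hpDirNormSq (T g) ≤ C * hpDirNormSq g) (hC : 0 ≤ C)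
    (hu : u ∈ H2Space) (hN : ∀ x, 0 < x → lineNorm u x ≤ N)
    (hK : ∀ x, 0 < x → lineNorm (deriv u) x ≤ K) (ha : 0 < a) (hx : 0 < x) :
    (1 - Real.exp (-(2 * a * x))) * (lineNorm (T u) x).toReal ^ 2 ≤
      C * (2 * Real.pi / a * (Real.exp (-a) * ‖u 1‖) ^ 2 + (K / a + N) ^ 2) := by
  have hmem : expMul a u ∈ DCSpace :=
    ⟨memHpDirichlet_expMul hu.1.1 hN hK ha, fun s hs ↦ by simp [expMul, hu.2 s hs]⟩
  obtain ⟨hTmem, hTle⟩ := hD _ hmem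
  rw [hcomm u] at hTmem hTle
  have hTu : T u ∈ H2Space := hT hu
  calc (1 - Real.exp (-(2 * a * x))) * (lineNorm (T u) x).toReal ^ 2
      = 2 * Real.pi / a * (1 / Real.pi *
          (a / 2 * (1 - Real.exp (-(2 * a * x))) * (lineNorm (T u) x).toReal ^ 2)) := by
        field_simp
    _ ≤ 2 * Real.pi / a * (C * hpDirNormSq (expMul a u)) := by
        refine mul_le_mul_of_nonneg_left ?_ (by positivity)
        exact (mul_sq_le_hpDirNormSq_expMul hTmem.1 hTu.1.1
          (fun x hx ↦ lineNorm_le_sqrt_hpHardyNormSq hTu.1 hx) ha hx).trans hTle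
    _ ≤ 2 * Real.pi / a * (C * ((Real.exp (-a) * ‖u 1‖) ^ 2 +
          1 / Real.pi * ((K + a * N) ^ 2 / (2 * a)))) := by
        gcongr
        exact hpDirNormSq_expMul_le hu.1.1 hN hK ha
    _ = C * (2 * Real.pi / a * (Real.exp (-a) * ‖u 1‖) ^ 2 + (K / a + N) ^ 2) := by
        field_simp

lemma lineNorm_le_sqrt_mul_of_lineNorm_deriv_le (hT : MapsTo T H2Space H2Space)
    (hcomm : ∃ᶠ a : ℝ in atTop, Function.Commute T (expMul a))
    (hD : ∀ g ∈ DCSpace, T g ∈ DCSpace ∧ hpDirNormSq (T g) ≤ C * hpDirNormSq g) (hC : 0 ≤ C)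
    (hu : u ∈ H2Space) (hN : ∀ x, 0 < x → lineNorm u x ≤ N)
    (hK : ∀ x, 0 < x → lineNorm (deriv u) x ≤ K) (hx : 0 < x) :
    lineNorm (T u) x ≤ ENNReal.ofReal (√C * N) := by
  set L := (lineNorm (T u) x).toReal
  have hexp {t : ℝ} (ht : 0 < t) : Tendsto (fun a : ℝ ↦ Real.exp (-(t * a))) atTop (𝓝 0) :=
    Real.tendsto_exp_neg_atTop_nhds_zero.comp (tendsto_id.const_mul_atTop ht)
  have hleft : Tendsto (fun a : ℝ ↦ (1 - Real.exp (-(2 * a * x))) * L ^ 2) atTop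
      (𝓝 ((1 - 0) * L ^ 2)) := by
    simp only [mul_right_comm 2 _ x]
    exact ((hexp (by positivity)).const_sub 1).mul_const _
  have hright : Tendsto
      (fun a : ℝ ↦ C * (2 * Real.pi / a * (Real.exp (-a) * ‖u 1‖) ^ 2 + (K / a + N) ^ 2)) atTop
      (𝓝 (C * (0 * (0 * ‖u 1‖) ^ 2 + (0 + N) ^ 2))) :=
    ((((tendsto_id.const_div_atTop _).mul
      ((Real.tendsto_exp_neg_atTop_nhds_zero.mul_const _).pow 2)).add
      (((tendsto_id.const_div_atTop _).add_const _).pow 2)).const_mul C)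
  have hsq : (1 - 0) * L ^ 2 ≤ C * (0 * (0 * ‖u 1‖) ^ 2 + (0 + N) ^ 2) :=
    sub_nonneg.1 <| ge_of_tendsto_of_frequently (hright.sub hleft) <|
      (hcomm.and_eventually (eventually_gt_atTop 0)).mono fun a ha ↦
        sub_nonneg.2 (sq_lineNorm_le_of_commute_expMul hT ha.1 hD hC hu hN hK ha.2 hx)
  have hfin : lineNorm (T u) x ≠ ⊤ :=
    ((lineNorm_le_sqrt_hpHardyNormSq (hT hu).1 hx).trans_lt ENNReal.ofReal_lt_top).ne
  refine (ENNReal.le_ofReal_iff_toReal_le hfin (by positivity)).2 ?_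
  refine (sq_le_sq₀ ENNReal.toReal_nonneg (by positivity)).1 ?_
  rw [mul_pow, Real.sq_sqrt hC]
  simpa using hsq

theorem hpHardyNormSq_le_of_hpDirNormSq_le (hcont : Continuous T) (hT : MapsTo T H2Space H2Space)
    (hcomm : ∃ᶠ a : ℝ in atTop, Function.Commute T (expMul a))
    (hD : ∀ g ∈ DCSpace, T g ∈ DCSpace ∧ hpDirNormSq (T g) ≤ C * hpDirNormSq g) (hC : 0 ≤ C)
    (hf : f ∈ H2Space) : hpHardyNormSq (T f) ≤ C * hpHardyNormSq f := by
  set N := (√(hpHardyNormSq f)).toNNReal with hNdef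
  have hN (x : ℝ) (hx : 0 < x) : lineNorm f x ≤ N := lineNorm_le_sqrt_hpHardyNormSq hf.1 hx
  have htranslate {ε x : ℝ} (hε : 0 < ε) (hx : 0 < x) :
      lineNorm (T (translateRHP f ε)) x ≤ ENNReal.ofReal (√C * N) := by
    lift ε to ℝ≥0 using hε.le
    refine lineNorm_le_sqrt_mul_of_lineNorm_deriv_le (K := N / ε) hT hcomm hD hC
      (translateRHP_mem_H2Space hf hε.le) (fun t ht ↦ ?_) (fun t ht ↦ ?_) hx
    · rw [lineNorm_translateRHP f ε ht]
      exact hN _ (by positivity)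
    · rw [lineNorm_deriv_translateRHP hf.1.1 hε.le ht]
      exact lineNorm_deriv_le hf.1.1 hN hε (by linarith)
  have hlim : Tendsto (fun k : ℕ ↦ T (translateRHP f (1 / (k + 1)))) atTop (𝓝 (T f)) :=
    (hcont.tendsto f).comp <| (tendsto_translateRHP hf.1.1.continuousOn hf.2).comp
      tendsto_one_div_add_atTop_nhds_zero_nat
  have hTf (x : ℝ) (hx : 0 < x) : lineNorm (T f) x ≤ ENNReal.ofReal (√C * N) := by
    refine Lp.eLpNorm_le_of_ae_tendsto (u := atTop)
      (f := fun (k : ℕ) (y : ℝ) ↦ T (translateRHP f (1 / (k + 1))) (x + y * I))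
      (.of_forall fun k ↦ htranslate (by positivity) hx) (fun k ↦ ?_)
      (.of_forall fun y ↦ tendsto_pi_nhds.1 hlim _)
    exact (continuous_line (hT (translateRHP_mem_H2Space hf (by positivity))).1.1.continuousOn
      (ofReal_mem_RHP.2 hx)).aestronglyMeasurable
  calc hpHardyNormSq (T f) ≤ ((√C * N).toNNReal : ℝ) ^ 2 :=
        hpHardyNormSq_le_sq (hT hf).1.1.continuousOn hTf
    _ = C * hpHardyNormSq f := by
        rw [Real.coe_toNNReal _ (by positivity), mul_pow, Real.sq_sqrt hC, hNdef,
          Real.coe_toNNReal _ (Real.sqrt_nonneg _), Real.sq_sqrt (hpHardyNormSq_nonneg f)]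

theorem opNormSqH2_le_opNormSqD (hcont : Continuous T) (hT : MapsTo T H2Space H2Space)
    (hcomm : ∃ᶠ a : ℝ in atTop, Function.Commute T (expMul a))
    (hD : ∃ C : ℝ, 0 ≤ C ∧ ∀ g ∈ DCSpace, T g ∈ DCSpace ∧
      hpDirNormSq (T g) ≤ C * hpDirNormSq g) : opNormSqH2 T ≤ opNormSqD T :=
  csInf_le_csInf ⟨0, fun _ hC ↦ hC.1⟩ hD fun _ ⟨hC, hCD⟩ ↦
    ⟨hC, fun _ hf ↦ ⟨hT hf, hpHardyNormSq_le_of_hpDirNormSq_le hcont hT hcomm hCD hC hf⟩⟩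

end Transfer

section Iterates

variable {T : (ℂ → ℂ) → ℂ → ℂ} {a C : ℝ}

lemma iterate_mem_and_le {α : Type*} {X : Set α} {q : α → ℝ} {S : α → α} (hC : 0 ≤ C)
    (hS : ∀ x ∈ X, S x ∈ X ∧ q (S x) ≤ C * q x) (n : ℕ) :
    ∀ x ∈ X, S^[n] x ∈ X ∧ q (S^[n] x) ≤ C ^ n * q x := by
  induction n with
  | zero => simp
  | succ n ih =>
    intro x hx
    obtain ⟨hmem, hle⟩ := ih x hx
    rw [Function.iterate_succ_apply', pow_succ', mul_assoc]
    exact ⟨(hS _ hmem).1, (hS _ hmem).2.trans (by gcongr)⟩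

lemma mapsTo_opSub_H2Space (hT : MapsTo T H2Space H2Space) (lam : ℂ) :
    MapsTo (opSub T lam) H2Space H2Space :=
  fun _ hf ↦ sub_const_mul_mem_H2Space (hT hf) hf lam

lemma opSub_mem_DCSpace_and_hpDirNormSq_le
    (hD : ∀ g ∈ DCSpace, T g ∈ DCSpace ∧ hpDirNormSq (T g) ≤ C * hpDirNormSq g) (lam : ℂ) :
    ∀ g ∈ DCSpace, opSub T lam g ∈ DCSpace ∧
      hpDirNormSq (opSub T lam g) ≤ (2 * C + 2 * ‖lam‖ ^ 2) * hpDirNormSq g := by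
  intro g hg
  obtain ⟨hmem, hle⟩ := hD g hg
  refine ⟨sub_const_mul_mem_DCSpace hmem hg lam,
    (hpDirNormSq_sub_const_mul_le hmem.1 hg.1 lam).trans ?_⟩
  linear_combination 2 * hle

lemma continuous_opSub (hT : Continuous T) (lam : ℂ) : Continuous (opSub T lam) :=
  hT.sub (continuous_id.const_smul lam)

lemma commute_opSub_expMul (hT : Function.Commute T (expMul a)) (lam : ℂ) :
    Function.Commute (opSub T lam) (expMul a) := by
  intro f
  funext s
  simp only [opSub, hT f, expMul]
  ring

lemma opNormSqD_iterate_le (hC : 0 ≤ C)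
    (hD : ∀ g ∈ DCSpace, T g ∈ DCSpace ∧ hpDirNormSq (T g) ≤ C * hpDirNormSq g) (n : ℕ) :
    opNormSqD (T^[n]) ≤ C ^ n :=
  csInf_le ⟨0, fun _ hC ↦ hC.1⟩ ⟨by positivity, iterate_mem_and_le hC hD n⟩

lemma opNormSqH2_nonneg (T : (ℂ → ℂ) → ℂ → ℂ) : 0 ≤ opNormSqH2 T :=
  Real.sInf_nonneg fun _ hC ↦ hC.1

lemma rhoH2_le_rhoD
    (hD : ∃ C : ℝ, 0 ≤ C ∧ ∀ g ∈ DCSpace, T g ∈ DCSpace ∧ hpDirNormSq (T g) ≤ C * hpDirNormSq g)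
    (hle : ∀ n : ℕ, opNormSqH2 (T^[n]) ≤ opNormSqD (T^[n])) : rhoH2 T ≤ rhoD T := by
  obtain ⟨C, hC, hCD⟩ := hD
  have hbdd : ∀ n : ℕ, 1 ≤ n → opNormSqD (T^[n]) ^ (1 / (2 * (n : ℝ))) ≤ C ^ (1 / 2 : ℝ) := by
    intro n hn
    calc opNormSqD (T^[n]) ^ (1 / (2 * (n : ℝ))) ≤ (C ^ n) ^ (1 / (2 * (n : ℝ))) :=
          Real.rpow_le_rpow ((opNormSqH2_nonneg _).trans (hle n)) (opNormSqD_iterate_le hC hCD n)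
            (by positivity)
      _ = C ^ (1 / 2 : ℝ) := by
          rw [← Real.rpow_natCast_mul hC]
          field_simp
  refine limsup_le_limsup (.of_forall fun n ↦ ?_) ?_ ?_
  · exact Real.rpow_le_rpow (opNormSqH2_nonneg _) (hle n) (by positivity)
  · exact (isBoundedUnder_of_eventually_ge (a := 0) (.of_forall fun n ↦
      Real.rpow_nonneg (opNormSqH2_nonneg _) _)).isCoboundedUnder_le
  · exact isBoundedUnder_of_eventually_le ((eventually_ge_atTop 1).mono hbdd)

end Iterates

section WeightedComposition

lemma continuous_WopHp (h : ℂ → ℂ) (c : ℝ) : Continuous (WopHp h c) := by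
  refine continuous_pi fun s ↦ ?_
  unfold WopHp
  split_ifs <;> fun_prop

lemma commute_WopHp_expMul {c a : ℝ} (ha : exp (-a * (c * I)) = 1) (h : ℂ → ℂ) :
    Function.Commute (WopHp h c) (expMul a) := by
  intro f
  funext s
  simp only [WopHp, expMul, mul_add, exp_add, ha]
  split_ifs <;> ring

lemma frequently_commute_WopHp_expMul (h : ℂ → ℂ) (c : ℝ) :
    ∃ᶠ a : ℝ in atTop, Function.Commute (WopHp h c) (expMul a) := by
  obtain rfl | hc := eq_or_ne c 0
  · exact (Eventually.of_forall fun a ↦ commute_WopHp_expMul (by simp) h).frequently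
  have hperiod : Tendsto (fun k : ℕ ↦ (k : ℝ) * (2 * Real.pi / |c|)) atTop atTop :=
    tendsto_natCast_atTop_atTop.atTop_mul_const (by positivity)
  refine hperiod.frequently (Frequently.of_forall fun k ↦ commute_WopHp_expMul ?_ h)
  have hc' : (c : ℂ) ≠ 0 := mod_cast hc
  rw [exp_eq_one_iff]
  obtain hsign | hsign := abs_choice c
  · exact ⟨-k, by rw [hsign]; push_cast; field_simp⟩
  · exact ⟨k, by rw [hsign]; push_cast; field_simp⟩

end WeightedComposition

theorem halfplane_hardy_dirichlet_norm_ineq_general {W : (ℂ → ℂ) → ℂ → ℂ} (hW : Continuous W)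
    (hcomm : ∃ᶠ a : ℝ in atTop, Function.Commute W (expMul a))
    (hH : MapsTo W H2Space H2Space)
    (hD : ∃ C : ℝ, 0 ≤ C ∧ ∀ g ∈ DCSpace, W g ∈ DCSpace ∧ hpDirNormSq (W g) ≤ C * hpDirNormSq g)
    (lam : ℂ) :
    (∀ n : ℕ, opNormSqH2 ((opSub W lam)^[n]) ≤ opNormSqD ((opSub W lam)^[n])) ∧
      rhoH2 (opSub W lam) ≤ rhoD (opSub W lam) := by
  obtain ⟨C, hC, hCD⟩ := hD
  have hsubD := opSub_mem_DCSpace_and_hpDirNormSq_le hCD lam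
  have hnorm (n : ℕ) : opNormSqH2 ((opSub W lam)^[n]) ≤ opNormSqD ((opSub W lam)^[n]) :=
    opNormSqH2_le_opNormSqD ((continuous_opSub hW lam).iterate n)
      ((mapsTo_opSub_H2Space hH lam).iterate n)
      (hcomm.mono fun _ ha ↦ (commute_opSub_expMul ha lam).iterate_left n)
      ⟨_, by positivity, iterate_mem_and_le (by positivity) hsubD n⟩
  exact ⟨hnorm, rhoH2_le_rhoD ⟨_, by positivity, hsubD⟩ hnorm⟩

/-- Let `τ(s) = s + ic` (`c > 0`) be a parabolic self-map of `ℂ₊`, let `h̃` be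
holomorphic on `ℂ₊`, and suppose `W̃ : f ↦ h̃·(f∘τ)` is bounded on both
`H²(ℂ₊)` and `𝒟(ℂ₊)`. Then for every `λ ∈ ℂ` and `n ≥ 1`,
`‖(W̃ − λI)ⁿ‖_{H²(ℂ₊)} ≤ ‖(W̃ − λI)ⁿ‖_{𝒟(ℂ₊)}`, and consequently
`ρ_{H²(ℂ₊)}(W̃ − λI) ≤ ρ_{𝒟(ℂ₊)}(W̃ − λI)`. -/
theorem halfplane_hardy_dirichlet_norm_ineq (c : ℝ) (hc : 0 < c)
    (ht : ℂ → ℂ) (hth : DifferentiableOn ℂ ht RHP)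
    (hbdH2 : ∃ C : ℝ, 0 ≤ C ∧ ∀ f ∈ H2Space, WopHp ht c f ∈ H2Space ∧
      hpHardyNormSq (WopHp ht c f) ≤ C * hpHardyNormSq f)
    (hbdD : ∃ C : ℝ, 0 ≤ C ∧ ∀ g ∈ DCSpace, WopHp ht c g ∈ DCSpace ∧
      hpDirNormSq (WopHp ht c g) ≤ C * hpDirNormSq g) :
    ∀ lam : ℂ,
      (∀ n : ℕ, 1 ≤ n →
        opNormSqH2 ((opSub (WopHp ht c) lam)^[n]) ≤
          opNormSqD ((opSub (WopHp ht c) lam)^[n])) ∧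
      rhoH2 (opSub (WopHp ht c) lam) ≤ rhoD (opSub (WopHp ht c) lam) := by
  intro lam
  obtain ⟨C, -, hC⟩ := hbdH2
  obtain ⟨hnorm, hrho⟩ := halfplane_hardy_dirichlet_norm_ineq_general (continuous_WopHp ht c)
    (frequently_commute_WopHp_expMul ht c) (fun f hf ↦ (hC f hf).1) hbdD lam
  exact ⟨fun n _ ↦ hnorm n, hrho⟩
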